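/- There exists n₀ such that for every n ≥ n₀, the balanced blow-up of the directed 5-cycle on n vertices, C⃗₅(n), is (up to isomorphism) the unique T⃗₃-free oriented graph on n vertices that maximizes the number of induced copies of P⃗₄ among all T⃗₃-free oriented graphs on n vertices. -/

import Mathlib

open scoped Classical

/-- An oriented graph: the arc relation has no loops and no 2-cycles. -/
def IsOriented {V : Type*} (A : V → V → Prop) : Prop :=
  ∀ a b : V, A a b → ¬ A b a

/-- `T⃗₃`-freeness: no three vertices span the arcs a→b, b→c, a→c. -/
def T3Free {V : Type*} (A : V → V → Prop) : Prop :=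
  ∀ a b c : V, ¬ (A a b ∧ A b c ∧ A a c)

/-- `S` is the vertex set of an induced copy of the directed path `P⃗ₖ` in the
oriented graph with arc relation `A`. -/
def IsInducedPath {V : Type*} (A : V → V → Prop) (k : ℕ) (S : Finset V) : Prop :=
  ∃ f : Fin k → V, Function.Injective f ∧ (∀ v : V, v ∈ S ↔ ∃ i, f i = v) ∧
    ∀ i j : Fin k, A (f i) (f j) ↔ (j : ℕ) = (i : ℕ) + 1

/-- The number of induced copies of `P⃗ₖ`. -/
noncomputable def numPaths {V : Type*} [Fintype V] [DecidableEq V]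
    (A : V → V → Prop) (k : ℕ) : ℕ :=
  (Finset.univ.filter fun S : Finset V => IsInducedPath A k S).card

/-- The number of induced copies of `P⃗ₖ` containing all vertices of `T`. -/
noncomputable def numPathsThrough {V : Type*} [Fintype V] [DecidableEq V]
    (A : V → V → Prop) (k : ℕ) (T : Finset V) : ℕ :=
  (Finset.univ.filter fun S : Finset V => IsInducedPath A k S ∧ T ⊆ S).card

/-- The density of induced copies of `P⃗ₖ`. -/
noncomputable def pathDensity {V : Type*} [Fintype V] [DecidableEq V]
    (A : V → V → Prop) (k : ℕ) : ℝ :=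
  (numPaths A k : ℝ) / ((Fintype.card V).choose k : ℝ)

/-- The maximum density of induced copies of `P⃗ₖ` over all `T⃗₃`-free oriented
graphs on `n` vertices. -/
noncomputable def maxDensityT3 (k n : ℕ) : ℝ :=
  sSup {d : ℝ | ∃ A : Fin n → Fin n → Prop, IsOriented A ∧ T3Free A ∧ d = pathDensity A k}

/-- The maximum density of induced copies of `P⃗ₖ` over all oriented graphs on `n`
vertices. -/
noncomputable def maxDensityAll (k n : ℕ) : ℝ :=
  sSup {d : ℝ | ∃ A : Fin n → Fin n → Prop, IsOriented A ∧ d = pathDensity A k}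

/-- `S` is the vertex set of an induced copy of the oriented graph `H` in the
oriented graph with arc relation `A`. -/
def IsInducedCopy {V W : Type*} (H : W → W → Prop) (A : V → V → Prop) (S : Finset V) : Prop :=
  ∃ f : W → V, Function.Injective f ∧ (∀ v : V, v ∈ S ↔ ∃ w, f w = v) ∧
    ∀ a b : W, A (f a) (f b) ↔ H a b

/-- The number of induced copies of `H` in `A`. -/
noncomputable def numCopies {V W : Type*} [Fintype V] [DecidableEq V]
    (H : W → W → Prop) (A : V → V → Prop) : ℕ :=
  (Finset.univ.filter fun S : Finset V => IsInducedCopy H A S).card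

/-- The number of (unordered) pairs of vertices on which the two oriented graphs `A`
and `B` differ (an arc must be added, removed, or reoriented). -/
noncomputable def pairDiff {V : Type*} [Fintype V] [LinearOrder V]
    (A B : V → V → Prop) : ℕ :=
  (Finset.univ.filter fun p : V × V => p.1 < p.2 ∧
    ¬ ((A p.1 p.2 ↔ B p.1 p.2) ∧ (A p.2 p.1 ↔ B p.2 p.1))).card

/-- `A` is a blow-up of the directed 5-cycle with parts given by the fibers of `g`. -/
def IsBlowupC5 {V : Type*} (A : V → V → Prop) (g : V → Fin 5) : Prop :=
  ∀ u v : V, A u v ↔ g v = g u + 1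

/-- The size of the part of vertices mapped to `i`. -/
noncomputable def partSize {V : Type*} [Fintype V] {m : ℕ} (g : V → Fin m) (i : Fin m) : ℕ :=
  (Finset.univ.filter fun v : V => g v = i).card

/-- `A` is a balanced blow-up of the directed 5-cycle, i.e. isomorphic to `C⃗₅(n)`. -/
def IsBalancedBlowupC5 {V : Type*} [Fintype V] (A : V → V → Prop) : Prop :=
  ∃ g : V → Fin 5, IsBlowupC5 A g ∧
    ∀ i j : Fin 5, (partSize g i : ℤ) - (partSize g j : ℤ) ≤ 1

/-!
A flag algebra inequality, whose weights were found by semidefinite programming and then rounded,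
bounds the number of induced paths on four vertices from above with a slack that counts the
inconsistent tuples: an induced path `a → b → c` and a pair `u, w` that is not placed around it as
in a blow-up of the directed 5-cycle. In a graph with as many induced paths as the balanced blow-up,
averaging therefore yields a path `a → b → c` with boundedly many inconsistent pairs, and adjacency
to `a`, `b`, `c` assigns each vertex to one of five independent parts.

Compare the graph with the blow-up on these parts. An induced path of the graph that is not one of
the blow-up contains two wrong pairs, which leave at most one of its vertices free, so there are
only `O(n)` of them; but the two remaining vertices of a path of the blow-up through a wrong pair
can be chosen freely in their parts, so one wrong pair already costs at least a constant times `n²`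
paths. Hence a maximizer is a blow-up, and moving a vertex from a larger part to a part smaller by
at least two would increase the number of induced paths.
-/

/-! ### The flag algebra certificate -/

/-- The sign of the ordered pair `(u, v)`: `1` for an arc from `u` to `v`, `-1` for an arc from `v`
to `u`, and `0` for a non-adjacent pair. The arguments of the sign-level functions below are named
after pairs: `ab` is the sign of `(a, b)`. -/
noncomputable def arcSign {V : Type*} (A : V → V → Prop) (u v : V) : SignType :=
  if A u v then 1 else if A v u then -1 else 0

/-- Three vertices whose pairs have the given signs do not span a transitive triangle. -/
def isT3FreeTriple (ab ac bc : SignType) : Bool :=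
  ab = 0 || ac = 0 || bc = 0 || (ab = bc && ac = -ab)

/-- `a → b → c` is an induced path. -/
def isPathTriple (ab ac bc : SignType) : Bool :=
  ab = 1 && ac = 0 && bc = 1

/-- The class of a vertex `u` relative to an induced path `a → b → c`: the index of the part that
contains `u` in every blow-up of the directed 5-cycle in which `a`, `b`, `c` lie in the parts
`0`, `1`, `2`, if there is such a blow-up. -/
def pathClass : (au bu cu : SignType) → Option (Fin 5)
  | .zero, .neg, .zero => some 0
  | .pos, .zero, .neg => some 1
  | .zero, .pos, .zero => some 2
  | .zero, .zero, .pos => some 3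
  | .neg, .zero, .zero => some 4
  | _, _, _ => none

/-- The sign of a pair of vertices from the parts `i` and `j` of a blow-up of the directed
5-cycle. -/
def cycleSign (i j : Fin 5) : SignType :=
  if j = i + 1 then 1 else if i = j + 1 then -1 else 0

/-- The pair `u, w` is placed as in a blow-up of the directed 5-cycle, as far as can be seen from
an induced path `a → b → c`. -/
def isConsistent (au bu cu aw bw cw uw : SignType) : Bool :=
  match pathClass au bu cu, pathClass aw bw cw with
  | some i, some j => uw = cycleSign i j
  | _, _ => false

/-- The `0`-`1` indicator of `a → b → c` being an induced path relative to which `u, w` is not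
consistent. -/
def inconsistency (ab ac bc au bu cu aw bw cw uw : SignType) : ℤ :=
  (isPathTriple ab ac bc && !isConsistent au bu cu aw bw cw uw).toInt

/-- The `0`-`1` indicator of `a → b → c → u` being an induced path, when `a → b → c` is one. -/
def pathExtension (au bu cu : SignType) : ℤ :=
  (decide (pathClass au bu cu = some 3)).toInt

/-- The squared linear forms of the certificate, on pairs `u, w` seen from a root `r`, given by
their values on the signs `ru`, `rw`, `uw`. -/
def rootWeight : (ru rw uw : SignType) → Fin 6 → ℤ
  | .zero, .zero, .zero => ![0, 0, 2, 0, 0, 0]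
  | .zero, .zero, _ => ![3, 3, 2, 0, 0, 0]
  | .zero, .pos, .zero | .pos, .zero, .zero => ![-1, -1, 2, 1, 1, 1]
  | .zero, .neg, .zero | .neg, .zero, .zero => ![-1, -1, 2, -1, -1, -1]
  | .zero, .pos, .pos | .pos, .zero, .neg => ![0, 2, -3, 0, 0, 2]
  | .zero, .neg, .neg | .neg, .zero, .pos => ![0, 2, -3, 0, 0, -2]
  | .zero, .pos, .neg | .pos, .zero, .pos => ![2, 0, -3, 1, 2, 3]
  | .zero, .neg, .pos | .neg, .zero, .neg => ![2, 0, -3, -1, -2, -3]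
  | .pos, .pos, .zero => ![-2, -2, 2, 2, 2, 2]
  | .neg, .neg, .zero => ![-2, -2, 2, -2, -2, -2]
  | .pos, .neg, .zero | .neg, .pos, .zero => ![-3, -3, -3, 0, 0, 0]
  | .pos, .neg, .pos | .neg, .pos, .neg => ![2, 0, -2, 0, 0, 0]
  | _, _, _ => 0

/-- The coefficients of the squares of the forms `rootWeight`. -/
def rootCoeff : Fin 6 → ℤ := ![170, 150, 48, 10, 120, 30]

/-- The squared linear forms of the certificate, on vertices `u` seen from an induced path
`a → b → c`. -/
def pathWeight : (au bu cu : SignType) → Fin 3 → ℤ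
  | .zero, .zero, .zero => ![2, 0, 0]
  | .zero, .zero, .pos => ![-2, 0, 1]
  | .zero, .pos, .zero => ![2, 2, -2]
  | .zero, .neg, .zero => ![2, -2, 2]
  | .neg, .zero, .zero => ![-2, 0, -1]
  | .pos, .zero, .pos | .neg, .zero, .neg => ![1, 0, 0]
  | .neg, .zero, .pos => ![-1, 0, 0]
  | .zero, .neg, .pos => ![0, -1, 0]
  | .neg, .pos, .zero => ![0, 1, 0]
  | _, _, _ => 0

/-- The coefficients of the squares of the forms `pathWeight`. -/
def pathCoeff : Fin 3 → ℤ := ![25, 35, 60]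

/-- The contribution to the certificate of the root `r` with the pairs `u, w` and `x, y`. -/
def rootTerm (ru rw uw rx ry xy : SignType) : ℤ :=
  ∑ i, rootCoeff i * (rootWeight ru rw uw i * rootWeight rx ry xy i)

/-- The contribution to the certificate of the path `a → b → c` with the vertices `u` and `w`. -/
def pathTerm (ab ac bc au bu cu aw bw cw : SignType) : ℤ :=
  if isPathTriple ab ac bc then
    3000 * (pathExtension au bu cu + pathExtension aw bw cw) +
      ∑ i, pathCoeff i * (pathWeight au bu cu i * pathWeight aw bw cw i)
  else 0

/-- The sum of `rootTerm` over the ways of pairing off `w, x, y, z`. -/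
def rootSum (rw rx ry rz wx wy wz xy xz yz : SignType) : ℤ :=
  rootTerm rw rx wx ry rz yz + rootTerm rw ry wy rx rz xz + rootTerm rw rz wz rx ry xy

/-- The sum of `pathTerm` over the orders of `a, b, c`. -/
def pathSum (ab ac bc au bu cu aw bw cw : SignType) : ℤ :=
  pathTerm ab ac bc au bu cu aw bw cw + pathTerm ac ab (-bc) au cu bu aw cw bw +
  pathTerm (-ab) bc ac bu au cu bw aw cw + pathTerm bc (-ab) (-ac) bu cu au bw cw aw +
  pathTerm (-ac) (-bc) ab cu au bu cw aw bw + pathTerm (-bc) (-ac) (-ab) cu bu au cw bw aw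

/-- The sum of `pathTerm` and `rootTerm` over all arrangements of the vertices `a, b, c, d, e`. -/
def certificateSum (ab ac bc ad bd cd ae be ce de : SignType) : ℤ :=
  pathSum ab ac bc ad bd cd ae be ce +
  pathSum ab ad bd ac bc (-cd) ae be de +
  pathSum ab ae be ac bc (-ce) ad bd (-de) +
  pathSum ac ad cd ab (-bc) (-bd) ae ce de +
  pathSum ac ae ce ab (-bc) (-be) ad cd (-de) +
  pathSum ad ae de ab (-bd) (-be) ac (-cd) (-ce) +
  pathSum bc bd cd (-ab) (-ac) (-ad) be ce de +
  pathSum bc be ce (-ab) (-ac) (-ae) bd cd (-de) +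
  pathSum bd be de (-ab) (-ad) (-ae) bc (-cd) (-ce) +
  pathSum cd ce de (-ac) (-ad) (-ae) (-bc) (-bd) (-be) +
  rootSum ab ac ad ae bc bd be cd ce de +
  rootSum (-ab) bc bd be ac ad ae cd ce de +
  rootSum (-ac) (-bc) cd ce ab ad ae bd be de +
  rootSum (-ad) (-bd) (-cd) de ab ac ae bc be ce +
  rootSum (-ae) (-be) (-ce) (-de) ab ac ad bc bd cd

set_option synthInstance.maxSize 1000 in
-- Instance search runs through twenty nested quantifiers and implications.
theorem certificateSum_add_inconsistency_le :
    ∀ ab ac bc, isT3FreeTriple ab ac bc → ∀ ad bd, isT3FreeTriple ab ad bd →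
    ∀ cd, isT3FreeTriple ac ad cd → isT3FreeTriple bc bd cd →
    ∀ ae be, isT3FreeTriple ab ae be → ∀ ce, isT3FreeTriple ac ae ce → isT3FreeTriple bc be ce →
    ∀ de, isT3FreeTriple ad ae de → isT3FreeTriple bd be de → isT3FreeTriple cd ce de →
    certificateSum ab ac bc ad bd cd ae be ce de +
      160 * inconsistency ab ac bc ad bd cd ae be ce de ≤ 2880 := by
  decide +kernel

section PathTuples

variable {V : Type*} [Fintype V] {A : V → V → Prop} {k : ℕ}

/-- The `k`-tuples of vertices that run through an induced path of `A` in order. -/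
noncomputable def pathTuples (A : V → V → Prop) (k : ℕ) : Finset (Fin k → V) :=
  {f | ∀ i j : Fin k, A (f i) (f j) ↔ (j : ℕ) = (i : ℕ) + 1}

theorem mem_pathTuples {f : Fin k → V} :
    f ∈ pathTuples A k ↔ ∀ i j : Fin k, A (f i) (f j) ↔ (j : ℕ) = (i : ℕ) + 1 := by
  simp [pathTuples]

theorem injective_of_mem_pathTuples {f : Fin k → V} (hf : f ∈ pathTuples A k) :
    Function.Injective f := by
  rw [mem_pathTuples] at hf
  refine .of_lt_imp_ne fun i j hij h => ?_
  have hsucc : (i : ℕ) + 1 < k := by omega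
  have hi := (hf i ⟨i + 1, hsucc⟩).2 rfl
  rw [h, hf] at hi
  simp only at hi
  omega

theorem eq_of_range_eq_of_mem_pathTuples {f g : Fin k → V} (hf : f ∈ pathTuples A k)
    (hg : g ∈ pathTuples A k) (h : Set.range f = Set.range g) : f = g := by
  have hinj := injective_of_mem_pathTuples hg
  rw [mem_pathTuples] at hf hg
  choose π hπ using fun i => h ▸ Set.mem_range_self (f := g) i
  obtain rfl : g = f ∘ π := funext fun i => (hπ i).symm
  have hπ_mono : StrictMono π := by
    cases k with
    | zero => exact fun i => i.elim0
    | succ k =>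
      refine Fin.strictMono_iff_lt_succ.2 fun i => ?_
      have := (hf _ _).1 ((hg i.castSucc i.succ).2 (by simp))
      exact Fin.lt_def.2 (by omega)
  rw [hπ_mono.eq_id, Function.comp_id]

theorem card_pathTuples [DecidableEq V] (A : V → V → Prop) (k : ℕ) :
    (pathTuples A k).card = numPaths A k := by
  rw [← Finset.card_image_of_injOn (f := fun f : Fin k → V => Finset.univ.image f)]
  · unfold numPaths
    congr 1
    ext S
    simp only [Finset.mem_image, Finset.mem_filter, Finset.mem_univ, true_and]
    refine ⟨?_, fun ⟨f, _, hS, hf⟩ => ⟨f, mem_pathTuples.2 hf, by ext v; simp [hS]⟩⟩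
    rintro ⟨f, hf, rfl⟩
    exact ⟨f, injective_of_mem_pathTuples hf, by simp, mem_pathTuples.1 hf⟩
  · intro f hf g hg h
    refine eq_of_range_eq_of_mem_pathTuples hf hg ?_
    simpa using congrArg (fun s : Finset V => (s : Set V)) h

end PathTuples

section Signs

variable {V : Type*} {A : V → V → Prop}

theorem arcSign_eq_one_iff {u v : V} : arcSign A u v = 1 ↔ A u v := by
  unfold arcSign
  split_ifs <;> simp_all

theorem arcSign_eq_zero_iff {u v : V} : arcSign A u v = 0 ↔ ¬A u v ∧ ¬A v u := by
  unfold arcSign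
  split_ifs <;> simp_all

theorem neg_arcSign (hA : IsOriented A) (u v : V) : -arcSign A u v = arcSign A v u := by
  have := hA u v
  unfold arcSign
  split_ifs <;> simp_all

theorem isT3FreeTriple_arcSign (hT : T3Free A) (a b c : V) :
    isT3FreeTriple (arcSign A a b) (arcSign A a c) (arcSign A b c) := by
  have := hT a b c; have := hT a c b; have := hT b a c
  have := hT b c a; have := hT c a b; have := hT c b a
  unfold arcSign isT3FreeTriple
  split_ifs <;> simp_all

theorem not_arc_of_arcSign_eq (hT : T3Free A) {x u v : V} (huv : arcSign A x u = arcSign A x v)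
    (hne : arcSign A x u ≠ 0) : ¬A u v := by
  have h₁ := hT x u v
  have h₂ := hT u v x
  unfold arcSign at huv hne
  split_ifs at huv hne <;> simp_all

theorem certificateSum_arcSign_add_inconsistency_le (hT : T3Free A) (a b c d e : V) :
    certificateSum (arcSign A a b) (arcSign A a c) (arcSign A b c) (arcSign A a d) (arcSign A b d)
        (arcSign A c d) (arcSign A a e) (arcSign A b e) (arcSign A c e) (arcSign A d e) +
      160 * inconsistency (arcSign A a b) (arcSign A a c) (arcSign A b c) (arcSign A a d)
        (arcSign A b d) (arcSign A c d) (arcSign A a e) (arcSign A b e) (arcSign A c e)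
        (arcSign A d e) ≤ 2880 :=
  have h := isT3FreeTriple_arcSign hT
  certificateSum_add_inconsistency_le _ _ _ (h a b c) _ _ (h a b d) _ (h a c d) (h b c d) _ _
    (h a b e) _ (h a c e) (h b c e) _ (h a d e) (h b d e) (h c d e)

end Signs

section FlagInequality

variable {V : Type*} [Fintype V] (A : V → V → Prop)

theorem sum_fin_five_fun_comp {M : Type*} [AddCommMonoid M] (F : V → V → V → V → V → M)
    {i j k l m : Fin 5} (h : Function.Bijective ![i, j, k, l, m]) :
    ∑ v : Fin 5 → V, F (v i) (v j) (v k) (v l) (v m) =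
      ∑ v : Fin 5 → V, F (v 0) (v 1) (v 2) (v 3) (v 4) :=
  ((Equiv.ofBijective _ h).symm.arrowCongr (Equiv.refl V)).sum_comp
    fun v => F (v 0) (v 1) (v 2) (v 3) (v 4)

theorem sum_fin_succ_fun {M : Type*} [AddCommMonoid M] {n : ℕ} (F : (Fin (n + 1) → V) → M) :
    ∑ v, F v = ∑ a, ∑ v : Fin n → V, F (Fin.cons a v) := by
  rw [← (Fin.consEquiv fun _ => V).sum_comp, Fintype.sum_prod_type]
  rfl

theorem sum_fin_four_fun {M : Type*} [AddCommMonoid M] (F : V → V → V → V → M) :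
    ∑ v : Fin 4 → V, F (v 0) (v 1) (v 2) (v 3) = ∑ a, ∑ b, ∑ c, ∑ u, F a b c u := by
  simp only [sum_fin_succ_fun, Fintype.sum_unique]
  rfl

theorem sum_fin_five_fun {M : Type*} [AddCommMonoid M] (F : V → V → V → V → V → M) :
    ∑ v : Fin 5 → V, F (v 0) (v 1) (v 2) (v 3) (v 4) = ∑ a, ∑ b, ∑ c, ∑ u, ∑ w, F a b c u w := by
  simp only [sum_fin_succ_fun, Fintype.sum_unique]
  rfl

theorem sum_sum_mul_mul_nonneg {ι α : Type*} [Fintype ι] [Fintype α] {c : ι → ℤ}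
    (hc : ∀ i, 0 ≤ c i) (f : α → ι → ℤ) : 0 ≤ ∑ p, ∑ q, ∑ i, c i * (f p i * f q i) :=
  calc 0 ≤ ∑ i, c i * (∑ p, f p i) ^ 2 :=
        Finset.sum_nonneg fun i _ => mul_nonneg (hc i) (sq_nonneg _)
    _ = ∑ i, ∑ p, ∑ q, c i * (f p i * f q i) := by
        simp_rw [sq, Finset.sum_mul_sum, Finset.mul_sum]
    _ = ∑ p, ∑ i, ∑ q, c i * (f p i * f q i) := Finset.sum_comm
    _ = ∑ p, ∑ q, ∑ i, c i * (f p i * f q i) :=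
        Finset.sum_congr rfl fun p _ => Finset.sum_comm

/-- `pathTerm` of five vertices. -/
noncomputable def pathTermAt (a b c u w : V) : ℤ :=
  pathTerm (arcSign A a b) (arcSign A a c) (arcSign A b c) (arcSign A a u) (arcSign A b u)
    (arcSign A c u) (arcSign A a w) (arcSign A b w) (arcSign A c w)

/-- `rootTerm` of five vertices. -/
noncomputable def rootTermAt (r u w x y : V) : ℤ :=
  rootTerm (arcSign A r u) (arcSign A r w) (arcSign A u w) (arcSign A r x) (arcSign A r y)
    (arcSign A x y)

/-- `inconsistency` of five vertices. -/
noncomputable def inconsistencyAt (a b c u w : V) : ℤ :=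
  inconsistency (arcSign A a b) (arcSign A a c) (arcSign A b c) (arcSign A a u) (arcSign A b u)
    (arcSign A c u) (arcSign A a w) (arcSign A b w) (arcSign A c w) (arcSign A u w)

theorem sum_rootTermAt_nonneg : 0 ≤ ∑ r, ∑ u, ∑ w, ∑ x, ∑ y, rootTermAt A r u w x y := by
  refine Finset.sum_nonneg fun r _ => ?_
  have hsq := sum_sum_mul_mul_nonneg (c := rootCoeff) (by decide) fun p : V × V =>
    rootWeight (arcSign A r p.1) (arcSign A r p.2) (arcSign A p.1 p.2)
  simp only [Fintype.sum_prod_type] at hsq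
  exact hsq

theorem le_sum_pathTermAt (a b c : V) :
    6000 * Fintype.card V *
      (∑ u, if isPathTriple (arcSign A a b) (arcSign A a c) (arcSign A b c) then
        pathExtension (arcSign A a u) (arcSign A b u) (arcSign A c u) else 0) ≤
    ∑ u, ∑ w, pathTermAt A a b c u w := by
  have hsq := sum_sum_mul_mul_nonneg (c := pathCoeff) (by decide) fun u : V =>
    pathWeight (arcSign A a u) (arcSign A b u) (arcSign A c u)
  by_cases h : isPathTriple (arcSign A a b) (arcSign A a c) (arcSign A b c)
  · simp only [pathTermAt, pathTerm, h, if_true, Finset.sum_add_distrib, ← Finset.mul_sum,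
      Finset.sum_const, Finset.card_univ, nsmul_eq_mul] at hsq ⊢
    linarith
  · simp [pathTermAt, pathTerm, h]

-- By permuting the coordinates of `v : Fin 5 → V`, the 60 path terms of the certificate have the
-- same sum over all `v`, and so do the 15 root terms.
theorem sum_path_add_root_add_inconsistency_le (hA : IsOriented A) (hT : T3Free A) :
    60 * ∑ a, ∑ b, ∑ c, ∑ u, ∑ w, pathTermAt A a b c u w +
      15 * ∑ r, ∑ u, ∑ w, ∑ x, ∑ y, rootTermAt A r u w x y +
      160 * ∑ a, ∑ b, ∑ c, ∑ u, ∑ w, inconsistencyAt A a b c u w ≤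
    2880 * (Fintype.card V : ℤ) ^ 5 := by
  have hsum := Finset.sum_le_sum fun (v : Fin 5 → V) (_ : v ∈ Finset.univ) =>
    certificateSum_arcSign_add_inconsistency_le hT (v 0) (v 1) (v 2) (v 3) (v 4)
  simp only [certificateSum, pathSum, rootSum, neg_arcSign hA, ← pathTermAt.eq_1, ← rootTermAt.eq_1,
    ← inconsistencyAt.eq_1, Finset.sum_add_distrib, ← Finset.mul_sum] at hsum
  simp (discharger := decide) only [sum_fin_five_fun_comp (pathTermAt A),
    sum_fin_five_fun_comp (rootTermAt A), sum_fin_five_fun, Finset.sum_const, Finset.card_univ,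
    Fintype.card_fun, Fintype.card_fin, nsmul_eq_mul] at hsum
  push_cast at hsum
  linarith

end FlagInequality

section InducedPathThree

variable {V : Type*} [Fintype V] {A : V → V → Prop}

theorem pathClass_eq_some_three_iff : ∀ {au bu cu : SignType},
    pathClass au bu cu = some 3 ↔ au = 0 ∧ bu = 0 ∧ cu = 1 := by
  decide

theorem isPathTriple_iff {ab ac bc : SignType} :
    isPathTriple ab ac bc ↔ ab = 1 ∧ ac = 0 ∧ bc = 1 := by
  simp [isPathTriple, and_assoc]

theorem mem_pathTuples_four_iff (hA : IsOriented A) {f : Fin 4 → V} :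
    f ∈ pathTuples A 4 ↔
      isPathTriple (arcSign A (f 0) (f 1)) (arcSign A (f 0) (f 2)) (arcSign A (f 1) (f 2)) ∧
      pathClass (arcSign A (f 0) (f 3)) (arcSign A (f 1) (f 3)) (arcSign A (f 2) (f 3)) =
        some 3 := by
  have hirr (v : V) : ¬A v v := fun h => hA v v h h
  rw [isPathTriple_iff, pathClass_eq_some_three_iff]
  simp only [mem_pathTuples, Fin.forall_fin_succ, arcSign_eq_one_iff, arcSign_eq_zero_iff]
  have h₀₁ := hA (f 0) (f 1)
  have h₁₂ := hA (f 1) (f 2)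
  have h₂₃ := hA (f 2) (f 3)
  simp [hirr]
  tauto

theorem sum_pathExtension (hA : IsOriented A) :
    ∑ a, ∑ b, ∑ c, ∑ u, (if isPathTriple (arcSign A a b) (arcSign A a c) (arcSign A b c) then
      pathExtension (arcSign A a u) (arcSign A b u) (arcSign A c u) else 0) =
    ((pathTuples A 4).card : ℤ) := by
  rw [← sum_fin_four_fun fun a b c u =>
    if isPathTriple (arcSign A a b) (arcSign A a c) (arcSign A b c) then
      pathExtension (arcSign A a u) (arcSign A b u) (arcSign A c u) else 0]
  calc _ = ∑ f : Fin 4 → V, if f ∈ pathTuples A 4 then (1 : ℤ) else 0 := by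
        refine Finset.sum_congr rfl fun f _ => ?_
        simp only [mem_pathTuples_four_iff hA, ite_and, pathExtension]
        split_ifs <;> simp_all
    _ = (pathTuples A 4).card := by simp

theorem card_pathTuples_add_sum_inconsistencyAt_le (hA : IsOriented A) (hT : T3Free A) :
    2250 * Fintype.card V * ((pathTuples A 4).card : ℤ) +
      ∑ a, ∑ b, ∑ c, ∑ u, ∑ w, inconsistencyAt A a b c u w ≤ 18 * (Fintype.card V : ℤ) ^ 5 := by
  have hcert := sum_path_add_root_add_inconsistency_le A hA hT
  have hroot := sum_rootTermAt_nonneg A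
  have hpath := Finset.sum_le_sum fun a (_ : a ∈ Finset.univ) =>
    Finset.sum_le_sum fun b (_ : b ∈ Finset.univ) =>
    Finset.sum_le_sum fun c (_ : c ∈ Finset.univ) => le_sum_pathTermAt A a b c
  simp only [← Finset.mul_sum, sum_pathExtension hA] at hpath
  linarith

theorem sum_pathExtension_le_card (a b c : V) :
    ∑ u, pathExtension (arcSign A a u) (arcSign A b u) (arcSign A c u) ≤ Fintype.card V := by
  have hle (u : V) : pathExtension (arcSign A a u) (arcSign A b u) (arcSign A c u) ≤ 1 := by
    unfold pathExtension
    exact (by decide : ∀ x : Bool, x.toInt ≤ 1) _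
  simpa using Finset.sum_le_sum fun u (_ : u ∈ Finset.univ) => hle u

theorem mul_card_pathTuples_le (hA : IsOriented A) {K : ℤ} (hK : 0 ≤ K)
    (h : ∀ a b c, isPathTriple (arcSign A a b) (arcSign A a c) (arcSign A b c) →
      K ≤ ∑ u, ∑ w, inconsistencyAt A a b c u w) :
    K * ((pathTuples A 4).card : ℤ) ≤
      Fintype.card V * ∑ a, ∑ b, ∑ c, ∑ u, ∑ w, inconsistencyAt A a b c u w := by
  rw [← sum_pathExtension hA, Finset.mul_sum, Finset.mul_sum]
  refine Finset.sum_le_sum fun a _ => ?_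
  rw [Finset.mul_sum, Finset.mul_sum]
  refine Finset.sum_le_sum fun b _ => ?_
  rw [Finset.mul_sum, Finset.mul_sum]
  refine Finset.sum_le_sum fun c _ => ?_
  by_cases hpath : isPathTriple (arcSign A a b) (arcSign A a c) (arcSign A b c)
  · simp only [hpath, if_true]
    calc K * ∑ u, pathExtension (arcSign A a u) (arcSign A b u) (arcSign A c u)
      _ ≤ K * Fintype.card V := by gcongr; exact sum_pathExtension_le_card a b c
      _ = Fintype.card V * K := mul_comm _ _
      _ ≤ _ := by gcongr; exact h a b c hpath
  · simp [inconsistencyAt, inconsistency, hpath, Bool.toInt]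

theorem exists_isPathTriple_sum_inconsistencyAt_le (hA : IsOriented A) (hT : T3Free A)
    (hcard : 15 ≤ Fintype.card V)
    (hmany : Fintype.card V ^ 4 ≤ 125 * (pathTuples A 4).card + 100 * Fintype.card V ^ 2) :
    ∃ a b c, isPathTriple (arcSign A a b) (arcSign A a c) (arcSign A b c) ∧
      ∑ u, ∑ w, inconsistencyAt A a b c u w ≤ 450000 := by
  by_contra! hno
  have hlow := mul_card_pathTuples_le hA (K := 450000) (by norm_num) fun a b c h => (hno a b c h).le
  have hflag := card_pathTuples_add_sum_inconsistencyAt_le hA hT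
  zify at hmany hcard
  generalize ∑ a, ∑ b, ∑ c, ∑ u, ∑ w, inconsistencyAt A a b c u w = bad at hlow hflag
  generalize (Fintype.card V : ℤ) = n at *
  generalize ((pathTuples A 4).card : ℤ) = N at *
  have hsq : 15 ^ 2 ≤ n ^ 2 := by gcongr
  have hbad : bad ≤ 1800 * n ^ 3 := by nlinarith
  have hN : n ^ 4 < 250 * N := by nlinarith [mul_nonneg (sq_nonneg n) (sub_nonneg.2 hsq)]
  refine lt_irrefl (450000 * N) ?_
  calc 450000 * N ≤ n * bad := hlow
    _ ≤ n * (1800 * n ^ 3) := by gcongr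
    _ = 1800 * n ^ 4 := by ring
    _ < 450000 * N := by linarith [hN]

end InducedPathThree

/-! ### Parts from a path -/

section PathClasses

variable {V : Type*} {A : V → V → Prop} {a b c : V}

/-- The class of `u` relative to the induced path `a → b → c`; see `pathClass`. -/
noncomputable def pathClassAt (A : V → V → Prop) (a b c u : V) : Option (Fin 5) :=
  pathClass (arcSign A a u) (arcSign A b u) (arcSign A c u)

theorem inconsistencyAt_of_isPathTriple
    (h : isPathTriple (arcSign A a b) (arcSign A a c) (arcSign A b c)) (u w : V) :
    inconsistencyAt A a b c u w =
      if ¬∃ i j, pathClassAt A a b c u = some i ∧ pathClassAt A a b c w = some j ∧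
        arcSign A u w = cycleSign i j then 1 else 0 := by
  simp only [inconsistencyAt, inconsistency, isConsistent, h, ← pathClassAt.eq_1]
  rcases pathClassAt A a b c u with _ | i <;> rcases pathClassAt A a b c w with _ | j <;>
    simp [Bool.toInt, Bool.cond_decide]

theorem exists_root_of_pathClass_eq : ∀ {au bu cu av bv cv : SignType} {i : Fin 5},
    pathClass au bu cu = some i → pathClass av bv cv = some i →
    au = av ∧ au ≠ 0 ∨ bu = bv ∧ bu ≠ 0 ∨ cu = cv ∧ cu ≠ 0 := by
  decide +kernel

theorem not_arc_of_pathClassAt_eq (hT : T3Free A) {u v : V} {i : Fin 5}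
    (hu : pathClassAt A a b c u = some i) (hv : pathClassAt A a b c v = some i) : ¬A u v := by
  rcases exists_root_of_pathClass_eq hu hv with h | h | h <;>
    exact not_arc_of_arcSign_eq hT h.1 h.2

variable [Fintype V]

/-- The ordered pairs of vertices on which `A` differs from the blow-up of the directed 5-cycle
with parts given by the fibers of `g`. -/
noncomputable def wrongPairs (A : V → V → Prop) (g : V → Fin 5) : Finset (V × V) :=
  {p | arcSign A p.1 p.2 ≠ cycleSign (g p.1) (g p.2)}

theorem mem_wrongPairs {g : V → Fin 5} {p : V × V} :
    p ∈ wrongPairs A g ↔ arcSign A p.1 p.2 ≠ cycleSign (g p.1) (g p.2) := by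
  simp [wrongPairs]

theorem exists_pathClassAt_eq_some
    (h : isPathTriple (arcSign A a b) (arcSign A a c) (arcSign A b c))
    (hfew : ∑ u, ∑ w, inconsistencyAt A a b c u w < Fintype.card V) (u : V) :
    ∃ i, pathClassAt A a b c u = some i := by
  by_contra! hu
  have hnonneg (u w : V) : 0 ≤ inconsistencyAt A a b c u w := by
    rw [inconsistencyAt_of_isPathTriple h]
    positivity
  refine hfew.not_ge ?_
  calc (Fintype.card V : ℤ) = ∑ w, inconsistencyAt A a b c u w := by
        simp [inconsistencyAt_of_isPathTriple h, hu]
    _ ≤ ∑ u, ∑ w, inconsistencyAt A a b c u w :=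
        Finset.single_le_sum (f := fun u => ∑ w, inconsistencyAt A a b c u w)
          (fun u _ => Finset.sum_nonneg fun w _ => hnonneg u w) (Finset.mem_univ u)

theorem exists_parts_of_isPathTriple (hT : T3Free A) {K : ℕ}
    (h : isPathTriple (arcSign A a b) (arcSign A a c) (arcSign A b c))
    (hfew : ∑ u, ∑ w, inconsistencyAt A a b c u w ≤ K) (hK : K < Fintype.card V) :
    ∃ g : V → Fin 5, (∀ u v, g u = g v → ¬A u v) ∧ (wrongPairs A g).card ≤ K := by
  choose g hg using exists_pathClassAt_eq_some h (hfew.trans_lt (by exact_mod_cast hK))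
  refine ⟨g, fun u v huv => not_arc_of_pathClassAt_eq hT (hg u) (huv ▸ hg v), ?_⟩
  have hind (u w : V) :
      inconsistencyAt A a b c u w = if (u, w) ∈ wrongPairs A g then 1 else 0 := by
    simp [mem_wrongPairs, inconsistencyAt_of_isPathTriple h, hg]
  have hsum : ∑ u, ∑ w, inconsistencyAt A a b c u w = (wrongPairs A g).card := by
    simp only [hind, ← Fintype.sum_prod_type']
    simp
  exact_mod_cast hsum ▸ hfew

end PathClasses

section Blowup

variable {V : Type*}

/-- The blow-up of the directed 5-cycle with parts given by the fibers of `g`. -/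
def blowupC5 (g : V → Fin 5) (u v : V) : Prop := g v = g u + 1

theorem isBlowupC5_blowupC5 (g : V → Fin 5) : IsBlowupC5 (blowupC5 g) g := fun _ _ => Iff.rfl

theorem IsBlowupC5.eq_blowupC5 {A : V → V → Prop} {g : V → Fin 5} (h : IsBlowupC5 A g) :
    A = blowupC5 g :=
  funext₂ fun u v => propext (h u v)

theorem isOriented_blowupC5 (g : V → Fin 5) : IsOriented (blowupC5 g) := fun u v huv hvu => by
  unfold blowupC5 at huv hvu
  omega

theorem t3Free_blowupC5 (g : V → Fin 5) : T3Free (blowupC5 g) := fun a b c ⟨hab, hbc, hac⟩ => by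
  unfold blowupC5 at hab hbc hac
  omega

theorem arcSign_blowupC5 (g : V → Fin 5) (u v : V) :
    arcSign (blowupC5 g) u v = cycleSign (g u) (g v) := by
  unfold arcSign cycleSign blowupC5
  congr

variable [Fintype V]

theorem mem_pathTuples_four_iff_arcSign {A : V → V → Prop} {f : Fin 4 → V} :
    f ∈ pathTuples A 4 ↔ ∀ s t, arcSign A (f s) (f t) = cycleSign s.castSucc t.castSucc := by
  have hcycle : ∀ s t : Fin 4, cycleSign s.castSucc t.castSucc =
      if (t : ℕ) = s + 1 then 1 else if (s : ℕ) = t + 1 then -1 else 0 := by decide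
  rw [mem_pathTuples]
  refine ⟨fun h s t => ?_, fun h s t => ?_⟩
  · simp only [hcycle, arcSign, h]
  · rw [← arcSign_eq_one_iff (A := A), h, hcycle]
    split_ifs <;> simp_all

theorem mem_pathTuples_blowupC5 {g : V → Fin 5} {f : Fin 4 → V} :
    f ∈ pathTuples (blowupC5 g) 4 ↔ ∃ i, ∀ t, g (f t) = i + t.succ := by
  have hcycle : ∀ c : Fin 4 → Fin 5, (∀ s t, cycleSign (c s) (c t) =
      cycleSign s.castSucc t.castSucc) ↔ ∃ i, ∀ t, c t = i + t.succ := by decide +kernel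
  simp only [mem_pathTuples_four_iff_arcSign, arcSign_blowupC5, hcycle fun t => g (f t)]

/-- The number of induced paths on four vertices in a blow-up of the directed 5-cycle with part
sizes `x`: the fourth elementary symmetric polynomial, since such a path misses one part and meets
the others once. -/
def blowupPathCount (x : Fin 5 → ℕ) : ℕ := ∑ i, ∏ j ∈ Finset.univ.erase i, x j

theorem card_pathTuples_blowupC5 (g : V → Fin 5) :
    (pathTuples (blowupC5 g) 4).card = blowupPathCount (partSize g) := by
  let paths (i : Fin 5) : Finset (Fin 4 → V) :=
    Fintype.piFinset fun t => {v | g v = i + t.succ}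
  have hunion : pathTuples (blowupC5 g) 4 = Finset.univ.biUnion paths := by
    ext f
    simp [mem_pathTuples_blowupC5, paths]
  have hdisj : ((Finset.univ : Finset (Fin 5)) : Set (Fin 5)).PairwiseDisjoint paths := by
    refine fun i _ j _ hij => Finset.disjoint_left.2 fun f hi hj => hij ?_
    simp only [paths, Fintype.mem_piFinset, Finset.mem_filter, Finset.mem_univ, true_and] at hi hj
    exact add_right_cancel ((hi 0).symm.trans (hj 0))
  have herase : ∀ i : Fin 5, Finset.univ.erase i = Finset.univ.image fun t : Fin 4 => i + t.succ :=
    by decide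
  rw [hunion, Finset.card_biUnion hdisj, blowupPathCount]
  refine Finset.sum_congr rfl fun i _ => ?_
  rw [Fintype.card_piFinset, herase, Finset.prod_image
    fun s _ t _ h => Fin.succ_injective 4 (add_left_cancel h)]
  rfl

theorem sum_partSize {m : ℕ} (g : V → Fin m) : ∑ i, partSize g i = Fintype.card V :=
  (Finset.card_eq_sum_card_fiberwise fun v _ => Finset.mem_coe.2 (Finset.mem_univ (g v))).symm

end Blowup

/-! ### Comparison with a blow-up -/

section Comparison

theorem exists_second_mismatch : ∀ (c : Fin 4 → Fin 5) (i j : Fin 4),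
    cycleSign i.castSucc j.castSucc ≠ cycleSign (c i) (c j) →
    ∃ k l : Fin 4, cycleSign k.castSucc l.castSucc ≠ cycleSign (c k) (c l) ∧
      ∃ r, ∀ t, t = i ∨ t = j ∨ t = k ∨ t = l ∨ t = r := by
  decide +kernel

variable {V : Type*} [Fintype V] {A : V → V → Prop} {g : V → Fin 5}

theorem mem_sdiff_of_mem_wrongPairs {f : Fin 4 → V} (hf : f ∈ pathTuples (blowupC5 g) 4)
    {i j : Fin 4} (hij : (f i, f j) ∈ wrongPairs A g) :
    f ∈ pathTuples (blowupC5 g) 4 \ pathTuples A 4 := by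
  refine Finset.mem_sdiff.2 ⟨hf, fun hfA => mem_wrongPairs.1 hij ?_⟩
  rw [mem_pathTuples_four_iff_arcSign.1 hfA, ← arcSign_blowupC5 g,
    mem_pathTuples_four_iff_arcSign.1 hf]

theorem exists_two_wrongPairs {f : Fin 4 → V}
    (hf : f ∈ pathTuples A 4 \ pathTuples (blowupC5 g) 4) :
    ∃ i j k l r : Fin 4, (f i, f j) ∈ wrongPairs A g ∧ (f k, f l) ∈ wrongPairs A g ∧
      ∀ t, t = i ∨ t = j ∨ t = k ∨ t = l ∨ t = r := by
  rw [Finset.mem_sdiff, mem_pathTuples_four_iff_arcSign, mem_pathTuples_four_iff_arcSign] at hf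
  obtain ⟨hA, hblowup⟩ := hf
  push Not at hblowup
  obtain ⟨i, j, hij⟩ := hblowup
  rw [arcSign_blowupC5] at hij
  obtain ⟨k, l, hkl, r, hcover⟩ := exists_second_mismatch (fun t => g (f t)) i j hij.symm
  exact ⟨i, j, k, l, r, by simpa [mem_wrongPairs, hA] using hij.symm,
    by simpa [mem_wrongPairs, hA] using hkl, hcover⟩

theorem card_filter_mem_mem_le {ι : Type*} [Fintype ι] [DecidableEq ι] (W : Finset (V × V))
    {i j k l r : ι} (hcover : ∀ t, t = i ∨ t = j ∨ t = k ∨ t = l ∨ t = r) :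
    (Finset.univ.filter fun f : ι → V => (f i, f j) ∈ W ∧ (f k, f l) ∈ W).card ≤
      W.card ^ 2 * Fintype.card V :=
  calc _ ≤ ((W ×ˢ W) ×ˢ (Finset.univ : Finset V)).card := by
        refine Finset.card_le_card_of_injOn (fun f => (((f i, f j), (f k, f l)), f r))
          (fun f hf => by simpa using hf) fun f _ f' _ h => ?_
        simp only [Prod.mk.injEq] at h
        obtain ⟨⟨⟨hi, hj⟩, hk, hl⟩, hr⟩ := h
        funext t
        rcases hcover t with rfl | rfl | rfl | rfl | rfl <;> assumption
    _ = W.card ^ 2 * Fintype.card V := by simp [Finset.card_product, sq]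

theorem card_pathTuples_sdiff_blowupC5_le (A : V → V → Prop) (g : V → Fin 5) :
    (pathTuples A 4 \ pathTuples (blowupC5 g) 4).card ≤
      1024 * ((wrongPairs A g).card ^ 2 * Fintype.card V) := by
  let positions : Finset (Fin 4 × Fin 4 × Fin 4 × Fin 4 × Fin 4) :=
    {(i, j, k, l, r) | ∀ t, t = i ∨ t = j ∨ t = k ∨ t = l ∨ t = r}
  let tuples (q : Fin 4 × Fin 4 × Fin 4 × Fin 4 × Fin 4) : Finset (Fin 4 → V) :=
    {f | (f q.1, f q.2.1) ∈ wrongPairs A g ∧ (f q.2.2.1, f q.2.2.2.1) ∈ wrongPairs A g}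
  have hsub : pathTuples A 4 \ pathTuples (blowupC5 g) 4 ⊆ positions.biUnion tuples := by
    intro f hf
    obtain ⟨i, j, k, l, r, hij, hkl, hcover⟩ := exists_two_wrongPairs hf
    exact Finset.mem_biUnion.2 ⟨(i, j, k, l, r), by simpa [positions] using hcover,
      by simp [tuples, hij, hkl]⟩
  have htuples : ∀ q ∈ positions,
      (tuples q).card ≤ (wrongPairs A g).card ^ 2 * Fintype.card V := by
    exact fun q hq => card_filter_mem_mem_le _ (Finset.mem_filter.1 hq).2
  have hpositions : positions.card ≤ 1024 := (Finset.card_le_univ _).trans (by simp)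
  calc _ ≤ (positions.biUnion tuples).card := Finset.card_le_card hsub
    _ ≤ positions.card * ((wrongPairs A g).card ^ 2 * Fintype.card V) :=
        Finset.card_biUnion_le_card_mul _ _ _ htuples
    _ ≤ _ := Nat.mul_le_mul_right _ hpositions

theorem exists_succ_positions : ∀ x y : Fin 5, x ≠ y →
    ∃ (s : Fin 5) (i j : Fin 4), i ≠ j ∧ x = s + i.succ ∧ y = s + j.succ := by
  decide

theorem sq_le_card_pathTuples_blowupC5_sdiff {m : ℕ} (hm : ∀ i, m ≤ partSize g i) {u v : V}
    (huv : (u, v) ∈ wrongPairs A g) (hg : g u ≠ g v) :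
    m ^ 2 ≤ (pathTuples (blowupC5 g) 4 \ pathTuples A 4).card := by
  obtain ⟨s, i, j, hij, hu, hv⟩ := exists_succ_positions (g u) (g v) hg
  let choices (t : Fin 4) : Finset V :=
    if t = i then {u} else if t = j then {v} else Finset.univ.filter fun w => g w = s + t.succ
  have hsub : Fintype.piFinset choices ⊆ pathTuples (blowupC5 g) 4 \ pathTuples A 4 := by
    intro f hf
    rw [Fintype.mem_piFinset] at hf
    have hi : f i = u := by simpa [choices] using hf i
    have hj : f j = v := by simpa [choices, hij.symm] using hf j
    refine mem_sdiff_of_mem_wrongPairs (mem_pathTuples_blowupC5.2 ⟨s, fun t => ?_⟩)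
      (i := i) (j := j) (by rwa [hi, hj])
    by_cases hti : t = i
    · rw [hti, hi, hu]
    by_cases htj : t = j
    · rw [htj, hj, hv]
    simpa [choices, hti, htj] using hf t
  calc m ^ 2 = ∏ t : Fin 4, if t = i ∨ t = j then 1 else m := by
        have : (Finset.univ.filter fun t : Fin 4 => ¬(t = i ∨ t = j)).card = 2 := by
          clear * - hij
          decide +revert
        simp [Finset.prod_ite, ← this]
    _ ≤ ∏ t, (choices t).card := by
        refine Finset.prod_le_prod' fun t _ => ?_
        by_cases hti : t = i
        · simp [choices, hti]
        by_cases htj : t = j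
        · simp [choices, htj, hij.symm]
        simpa [choices, hti, htj, partSize] using hm (s + t.succ)
    _ = (Fintype.piFinset choices).card := (Fintype.card_piFinset _).symm
    _ ≤ _ := Finset.card_le_card hsub

end Comparison

/-! ### Part sizes -/

section PathCount

theorem blowupPathCount_comp_perm (x : Fin 5 → ℕ) (σ : Equiv.Perm (Fin 5)) :
    blowupPathCount (x ∘ σ) = blowupPathCount x := by
  unfold blowupPathCount
  refine Fintype.sum_equiv σ _ _ fun i => ?_
  exact Finset.prod_equiv σ (by simp) fun _ _ => rfl

theorem blowupPathCount_eq (x : Fin 5 → ℕ) : blowupPathCount x =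
    x 1 * x 2 * x 3 * x 4 + x 0 * x 2 * x 3 * x 4 + x 0 * x 1 * x 3 * x 4 +
      x 0 * x 1 * x 2 * x 4 + x 0 * x 1 * x 2 * x 3 := by
  have herase (i : Fin 5) : Finset.univ.erase i = Finset.univ.image i.succAbove := by
    ext j
    simp
  simp only [blowupPathCount, herase, Finset.prod_image Fin.succAbove_right_injective.injOn,
    Fin.sum_univ_five, Fin.prod_univ_four]
  rfl

theorem exists_perm_apply_eq_div_of_balanced (x : Fin 5 → ℕ) (h : ∀ i j, x i ≤ x j + 1) :
    ∃ σ : Equiv.Perm (Fin 5), x ∘ σ = fun i : Fin 5 => (∑ j, x j + i) / 5 := by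
  refine ⟨Tuple.sort x, ?_⟩
  have hmono := Tuple.monotone_sort x
  have hsum := Equiv.sum_comp (Tuple.sort x) x
  have hfirst_last := h (Tuple.sort x 4) (Tuple.sort x 0)
  have h₀₁ : x _ ≤ x _ := hmono (show (0 : Fin 5) ≤ 1 by decide)
  have h₁₂ : x _ ≤ x _ := hmono (show (1 : Fin 5) ≤ 2 by decide)
  have h₂₃ : x _ ≤ x _ := hmono (show (2 : Fin 5) ≤ 3 by decide)
  have h₃₄ : x _ ≤ x _ := hmono (show (3 : Fin 5) ≤ 4 by decide)
  rw [← hsum]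
  funext i
  simp only [Fin.sum_univ_five, Function.comp_apply]
  fin_cases i <;> simp <;> omega

/-- The number of induced paths on four vertices in the balanced blow-up of the directed 5-cycle
on `n` vertices, whose part sizes in increasing order are `(n + i) / 5`. -/
def balancedPathCount (n : ℕ) : ℕ := blowupPathCount fun i => (n + i) / 5

theorem blowupPathCount_of_balanced {x : Fin 5 → ℕ} (h : ∀ i j, x i ≤ x j + 1) :
    blowupPathCount x = balancedPathCount (∑ i, x i) := by
  obtain ⟨σ, hσ⟩ := exists_perm_apply_eq_div_of_balanced x h
  rw [← blowupPathCount_comp_perm x σ, hσ, balancedPathCount]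

theorem pow_four_le_balancedPathCount (n : ℕ) :
    n ^ 4 ≤ 125 * balancedPathCount n + 100 * n ^ 2 := by
  obtain ⟨q, r, hr, rfl⟩ : ∃ q r, r < 5 ∧ n = 5 * q + r := ⟨n / 5, n % 5, by omega, by omega⟩
  have hdiv (s : ℕ) : (5 * q + r + s) / 5 = q + (r + s) / 5 := by omega
  simp only [balancedPathCount, blowupPathCount_eq, hdiv]
  interval_cases r <;> norm_num <;> ring_nf <;> nlinarith

theorem blowupPathCount_lt_of_zero_one {x y : Fin 5 → ℕ} (h₀ : x 0 = y 0 + 1) (h₁ : y 1 = x 1 + 1)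
    (hrest : ∀ k, k ≠ 0 → k ≠ 1 → x k = y k) (hpos : ∀ k, 0 < y k) (hlt : x 1 < y 0) :
    blowupPathCount x < blowupPathCount y := by
  have hprod : 0 < (y 0 - x 1) * (y 2 * y 3 + y 2 * y 4 + y 3 * y 4) := by
    have := hpos 2; have := hpos 3; have := Nat.sub_pos_of_lt hlt
    positivity
  rw [blowupPathCount_eq, blowupPathCount_eq, h₀, h₁, hrest 2 (by decide) (by decide),
    hrest 3 (by decide) (by decide), hrest 4 (by decide) (by decide)]
  zify [hlt.le] at hprod ⊢
  linarith

theorem blowupPathCount_lt_of_move {x y : Fin 5 → ℕ} {i j : Fin 5} (hi : x i = y i + 1)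
    (hj : y j = x j + 1) (hrest : ∀ k, k ≠ i → k ≠ j → x k = y k) (hpos : ∀ k, 0 < y k)
    (hlt : x j < y i) : blowupPathCount x < blowupPathCount y := by
  have hij : i ≠ j := by
    rintro rfl
    omega
  obtain ⟨σ, rfl, rfl⟩ : ∃ σ : Equiv.Perm (Fin 5), σ 0 = i ∧ σ 1 = j :=
    MulAction.is_two_pretransitive_iff.1 (Equiv.Perm.isMultiplyPretransitive _ 2) (by decide) hij
  rw [← blowupPathCount_comp_perm x σ, ← blowupPathCount_comp_perm y σ]
  exact blowupPathCount_lt_of_zero_one hi hj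
    (fun k h₀ h₁ => hrest _ (σ.injective.ne h₀) (σ.injective.ne h₁)) (fun k => hpos _) hlt

theorem mul_prod_le_pow_four {b c d e n : ℕ} (h : b + c + d + e ≤ n) :
    256 * (b * c * d * e) ≤ n ^ 4 := by
  have hpair (s t : ℕ) : 4 * (s * t) ≤ (s + t) ^ 2 := by
    linarith [four_mul_le_sq_add s t]
  calc 256 * (b * c * d * e) = 16 * ((4 * (b * c)) * (4 * (d * e))) := by ring
    _ ≤ 16 * ((b + c) ^ 2 * (d + e) ^ 2) := by gcongr <;> apply hpair
    _ = (4 * ((b + c) * (d + e))) ^ 2 := by ring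
    _ ≤ (((b + c) + (d + e)) ^ 2) ^ 2 := by gcongr; apply hpair
    _ = (b + c + d + e) ^ 4 := by ring
    _ ≤ n ^ 4 := by gcongr

theorem blowupPathCount_le (x : Fin 5 → ℕ) (i : Fin 5) :
    256 * blowupPathCount x ≤ (∑ j, x j) ^ 4 + 1024 * x i * (∑ j, x j) ^ 3 := by
  wlog hi : i = 0 generalizing x i
  · simpa [blowupPathCount_comp_perm, Equiv.sum_comp] using this (x ∘ Equiv.swap 0 i) 0 rfl
  subst hi
  have hle (j : Fin 5) : x j ≤ ∑ j, x j := Finset.single_le_sum (by simp) (Finset.mem_univ j)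
  have hamgm : 256 * (x 1 * x 2 * x 3 * x 4) ≤ (∑ j, x j) ^ 4 :=
    mul_prod_le_pow_four (by rw [Fin.sum_univ_five]; omega)
  generalize ∑ j, x j = n at *
  have h₁ : x 0 * x 2 * x 3 * x 4 ≤ x 0 * n * n * n := by gcongr <;> apply hle
  have h₂ : x 0 * x 1 * x 3 * x 4 ≤ x 0 * n * n * n := by gcongr <;> apply hle
  have h₃ : x 0 * x 1 * x 2 * x 4 ≤ x 0 * n * n * n := by gcongr <;> apply hle
  have h₄ : x 0 * x 1 * x 2 * x 3 ≤ x 0 * n * n * n := by gcongr <;> apply hle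
  rw [blowupPathCount_eq]
  linarith

end PathCount

section PartSizes

theorem le_mul_of_pow_four_le {x : Fin 5 → ℕ} {n : ℕ} (hx : ∑ i, x i = n)
    (h : 255 * n ^ 4 ≤ 32000 * blowupPathCount x) (i : Fin 5) : n ≤ 1000 * x i := by
  have hle := hx ▸ blowupPathCount_le x i
  rcases n.eq_zero_or_pos with rfl | hn
  · exact Nat.zero_le _
  refine Nat.le_of_mul_le_mul_right (c := n ^ 3) ?_ (by positivity)
  nlinarith

variable {V : Type*} [Fintype V]

theorem partSize_update {m : ℕ} (g : V → Fin m) (v : V) (j k : Fin m) :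
    partSize (Function.update g v j) k + (if g v = k then 1 else 0) =
      partSize g k + if j = k then 1 else 0 := by
  have hrest : ∑ w ∈ Finset.univ.erase v, (if Function.update g v j w = k then 1 else 0) =
      ∑ w ∈ Finset.univ.erase v, if g w = k then 1 else 0 :=
    Finset.sum_congr rfl fun w hw => by rw [Function.update_of_ne (Finset.ne_of_mem_erase hw)]
  simp only [partSize, Finset.card_filter, ← Finset.add_sum_erase _ _ (Finset.mem_univ v), hrest,
    Function.update_self]
  omega

theorem balanced_of_forall_blowupPathCount_le {g : V → Fin 5} (hpos : ∀ i, 2 ≤ partSize g i)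
    (hmax : ∀ g' : V → Fin 5,
      blowupPathCount (partSize g') ≤ blowupPathCount (partSize g)) (i j : Fin 5) :
    partSize g i ≤ partSize g j + 1 := by
  by_contra! hlt
  have hij : i ≠ j := by
    rintro rfl
    omega
  obtain ⟨v, hv⟩ := Finset.card_pos.1 (two_pos.trans_le (hpos i))
  obtain rfl : g v = i := (Finset.mem_filter.1 hv).2
  have hupdate := partSize_update g v j
  have hi := hupdate (g v)
  have hj := hupdate j
  simp only [hij, hij.symm, if_true, if_false] at hi hj
  refine (hmax (Function.update g v j)).not_gt
    (blowupPathCount_lt_of_move hi.symm hj (fun k hki hkj => ?_) (fun k => ?_) (by omega))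
  · simpa [hki.symm, hkj.symm] using (hupdate k).symm
  · have hk := hupdate k
    have := hpos k
    split_ifs at hk <;> omega

theorem exists_balanced_partSize (n : ℕ) :
    ∃ g : Fin n → Fin 5, ∀ i j, partSize g i ≤ partSize g j + 1 := by
  have hsize (i : Fin 5) : partSize (fun v : Fin n => Fin.ofNat 5 v) i =
      n / 5 + if (i : ℕ) % 5 < n % 5 then 1 else 0 := by
    have hiff (v : ℕ) : Fin.ofNat 5 v = i ↔ v ≡ i [MOD 5] := by
      rw [Fin.ext_iff, Fin.val_ofNat, Nat.ModEq, Nat.mod_eq_of_lt i.isLt]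
    rw [← Nat.count_modEq_card n (by norm_num) i, Nat.count_eq_card_filter_range, partSize,
      Finset.card_filter, Finset.card_filter,
      Fin.sum_univ_eq_sum_range fun v => if Fin.ofNat 5 v = i then 1 else 0]
    simp only [hiff]
  refine ⟨fun v => Fin.ofNat 5 v, fun i j => ?_⟩
  rw [hsize, hsize]
  split_ifs <;> omega

end PartSizes

section Maximizers

variable {V : Type*} [Fintype V] {A : V → V → Prop} {g : V → Fin 5} {K : ℕ}

theorem eq_blowupC5_of_wrongPairs_eq_empty (h : wrongPairs A g = ∅) : A = blowupC5 g := by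
  funext u v
  have huv : (u, v) ∉ wrongPairs A g := h ▸ Finset.notMem_empty _
  rw [mem_wrongPairs, not_not, ← arcSign_blowupC5] at huv
  rw [← arcSign_eq_one_iff (A := A), huv, arcSign_eq_one_iff]

theorem ne_of_mem_wrongPairs (hg : ∀ u v, g u = g v → ¬A u v) {u v : V}
    (huv : (u, v) ∈ wrongPairs A g) : g u ≠ g v := fun h => by
  refine mem_wrongPairs.1 huv ?_
  rw [arcSign_eq_zero_iff.2 ⟨hg u v h, hg v u h.symm⟩, h]
  exact (by decide : ∀ i, 0 = cycleSign i i) _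

theorem card_le_mul_partSize (hK : (wrongPairs A g).card ≤ K)
    (hcard : 10 ^ 10 * (K + 1) ^ 2 ≤ Fintype.card V)
    (hmany : Fintype.card V ^ 4 ≤ 125 * (pathTuples A 4).card + 100 * Fintype.card V ^ 2)
    (i : Fin 5) : Fintype.card V ≤ 1000 * partSize g i := by
  refine le_mul_of_pow_four_le (sum_partSize g) ?_ i
  have hnew := card_pathTuples_sdiff_blowupC5_le A g
  have hsplit : (pathTuples A 4).card ≤ _ := Finset.card_le_card_sdiff_add_card
    (t := pathTuples (blowupC5 g) 4)
  rw [card_pathTuples_blowupC5] at hsplit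
  generalize Fintype.card V = n at *
  have hfew : (wrongPairs A g).card ^ 2 * n ≤ (K + 1) ^ 2 * n := by gcongr; omega
  have hn : 10 ^ 10 * 1 ≤ n := hcard.trans' (by gcongr; exact Nat.one_le_pow _ _ (by omega))
  have hn_sq : 10 ^ 10 * n ^ 2 ≤ n ^ 3 := by nlinarith
  have hn_cube : 10 ^ 10 * n ^ 3 ≤ n ^ 4 := by nlinarith
  have hK_mul : 10 ^ 10 * ((K + 1) ^ 2 * n) ≤ n ^ 2 := by nlinarith
  omega

theorem wrongPairs_eq_empty (hg : ∀ u v, g u = g v → ¬A u v) (hK : (wrongPairs A g).card ≤ K)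
    (hcard : 10 ^ 10 * (K + 1) ^ 2 ≤ Fintype.card V)
    (hlarge : ∀ i, Fintype.card V ≤ 1000 * partSize g i)
    (hmax : (pathTuples (blowupC5 g) 4).card ≤ (pathTuples A 4).card) : wrongPairs A g = ∅ := by
  by_contra! hne
  obtain ⟨⟨u, v⟩, huv⟩ := hne
  have hlost := sq_le_card_pathTuples_blowupC5_sdiff (m := Fintype.card V / 1000)
    (fun i => Nat.div_le_of_le_mul (hlarge i)) huv (ne_of_mem_wrongPairs hg huv)
  have hexchange := Finset.card_sdiff_le_card_sdiff_iff.2 hmax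
  have hnew := card_pathTuples_sdiff_blowupC5_le A g
  have hfew : (wrongPairs A g).card ^ 2 * Fintype.card V ≤ (K + 1) ^ 2 * Fintype.card V := by
    gcongr
    omega
  have hn : 0 < Fintype.card V := Fintype.card_pos_iff.2 ⟨u⟩
  generalize Fintype.card V = n at *
  have hdiv : n ^ 2 ≤ (2000 * (n / 1000)) ^ 2 := by
    gcongr
    have : 10 ^ 10 * 1 ≤ n := hcard.trans' (by gcongr; exact Nat.one_le_pow _ _ (by omega))
    omega
  have hn_sq : 10 ^ 10 * ((K + 1) ^ 2 * n) ≤ n ^ 2 := by nlinarith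
  have : 0 < (K + 1) ^ 2 * n := by positivity
  have : (2000 * (n / 1000)) ^ 2 = 4000000 * (n / 1000) ^ 2 := by ring
  omega

theorem numPaths_of_isBalancedBlowupC5 [DecidableEq V] (h : IsBalancedBlowupC5 A) :
    numPaths A 4 = balancedPathCount (Fintype.card V) := by
  obtain ⟨g, hg, hbalanced⟩ := h
  rw [← card_pathTuples, hg.eq_blowupC5, card_pathTuples_blowupC5, ← sum_partSize g]
  exact blowupPathCount_of_balanced fun i j => by have := hbalanced i j; omega

theorem isBalancedBlowupC5_of_card_pathTuples (hA : IsOriented A) (hT : T3Free A)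
    (hcard : 10 ^ 10 * 450001 ^ 2 ≤ Fintype.card V)
    (hmany : Fintype.card V ^ 4 ≤ 125 * (pathTuples A 4).card + 100 * Fintype.card V ^ 2)
    (hmax : ∀ g : V → Fin 5, blowupPathCount (partSize g) ≤ (pathTuples A 4).card) :
    IsBalancedBlowupC5 A := by
  obtain ⟨a, b, c, hpath, hfew⟩ :=
    exists_isPathTriple_sum_inconsistencyAt_le hA hT (by omega) hmany
  obtain ⟨g, hg, hK⟩ := exists_parts_of_isPathTriple (K := 450000) hT hpath hfew (by omega)
  have hlarge := card_le_mul_partSize hK hcard hmany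
  obtain rfl := eq_blowupC5_of_wrongPairs_eq_empty <| wrongPairs_eq_empty hg hK hcard hlarge
    ((card_pathTuples_blowupC5 g).trans_le (hmax g))
  rw [card_pathTuples_blowupC5] at hmax
  have hbalanced := balanced_of_forall_blowupPathCount_le
    (fun i => by have := hlarge i; omega) hmax
  exact ⟨g, isBlowupC5_blowupC5 g, fun i j => by have := hbalanced i j; omega⟩

theorem isBalancedBlowupC5_of_forall_numPaths_le {n : ℕ} (hn : 10 ^ 10 * 450001 ^ 2 ≤ n)
    {A : Fin n → Fin n → Prop} (hA : IsOriented A) (hT : T3Free A)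
    (hmax : ∀ B : Fin n → Fin n → Prop, IsOriented B → T3Free B → numPaths B 4 ≤ numPaths A 4) :
    IsBalancedBlowupC5 A := by
  have hblowup (g : Fin n → Fin 5) : blowupPathCount (partSize g) ≤ (pathTuples A 4).card := by
    rw [← card_pathTuples_blowupC5, card_pathTuples, card_pathTuples]
    exact hmax _ (isOriented_blowupC5 g) (t3Free_blowupC5 g)
  have hbalanced : balancedPathCount n ≤ (pathTuples A 4).card := by
    obtain ⟨g, hg⟩ := exists_balanced_partSize n
    simpa only [blowupPathCount_of_balanced hg, sum_partSize, Fintype.card_fin] using hblowup g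
  refine isBalancedBlowupC5_of_card_pathTuples hA hT (by rwa [Fintype.card_fin]) ?_ hblowup
  rw [Fintype.card_fin]
  have := pow_four_le_balancedPathCount n
  omega

end Maximizers

/-- For all sufficiently large `n`, the balanced blow-up `C⃗₅(n)` is,
up to isomorphism, the unique maximizer of the number of induced copies of `P⃗₄` among
`T⃗₃`-free oriented graphs on `n` vertices: a `T⃗₃`-free oriented graph on `n` vertices
is a maximizer if and only if it is a balanced blow-up of the directed 5-cycle. -/
theorem unique_maximizer_P4_T3free :
    ∃ n₀ : ℕ, ∀ n : ℕ, n₀ ≤ n →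
      ∀ A : Fin n → Fin n → Prop, IsOriented A → T3Free A →
        ((∀ B : Fin n → Fin n → Prop, IsOriented B → T3Free B →
            numPaths B 4 ≤ numPaths A 4) ↔ IsBalancedBlowupC5 A) := by
  refine ⟨10 ^ 10 * 450001 ^ 2, fun n hn A hA hT =>
    ⟨isBalancedBlowupC5_of_forall_numPaths_le hn hA hT, fun hA_balanced B hB hBT => ?_⟩⟩
  obtain ⟨M, ⟨hM, hMT⟩, hMmax⟩ := Set.exists_max_image
    {C : Fin n → Fin n → Prop | IsOriented C ∧ T3Free C} (fun C => numPaths C 4)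
    (Set.toFinite _) ⟨A, hA, hT⟩
  have hM_balanced := isBalancedBlowupC5_of_forall_numPaths_le hn hM hMT
    fun C hC hCT => hMmax C ⟨hC, hCT⟩
  calc numPaths B 4 ≤ numPaths M 4 := hMmax B ⟨hB, hBT⟩
    _ = balancedPathCount (Fintype.card (Fin n)) := numPaths_of_isBalancedBlowupC5 hM_balanced
    _ = numPaths A 4 := (numPaths_of_isBalancedBlowupC5 hA_balanced).symm
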